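/- Let ξ, η, σ ∈ ℂ with Im(ξ²) > 0, Im(η²) > 0, and |Re σ| < 1/4. Then H₀⁽¹⁾((ξ² + η²)/2) = −(2^{1/2}/π²) ∫_{σ−i∞}^{σ+i∞} Γ(1/4 − s) Γ(1/4 + s) D_{2s−1/2}((1−i)ξ) D_{−2s−1/2}((1−i)η) ds. (Note that ((1−i)ξ)²/2 = −iξ² has positive real part and Im((ξ²+η²)/2) > 0, so all functions appearing are in the domains of the stated representations.) -/

import Mathlib

/-- Confluent hypergeometric function of the second kind via its Laplace-transform
representation, valid for `Re a > 0`, `Re z > 0` (principal branch powers). -/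
noncomputable def hypU (a b z : ℂ) : ℂ :=
  (Complex.Gamma a)⁻¹ *
    ∫ t in Set.Ioi (0 : ℝ), Complex.exp (-z * t) * (t : ℂ) ^ (a - 1) * ((1 : ℂ) + t) ^ (b - a - 1)

/-- Parabolic cylinder function `D_ν(z) = 2^{ν/2} e^{-z²/4} U(-ν/2, 1/2, z²/2)`,
valid for `Re ν < 0`, `Re(z²) > 0` (principal branch powers). -/
noncomputable def parD (ν z : ℂ) : ℂ :=
  (2 : ℂ) ^ (ν / 2) * Complex.exp (-z ^ 2 / 4) * hypU (-ν / 2) (1 / 2) (z ^ 2 / 2)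

/-- Order-zero Hankel function of the first kind,
`H₀⁽¹⁾(ζ) = (-2i/√π) e^{iζ} U(1/2, 1, -2iζ)`, valid for `Im ζ > 0`. -/
noncomputable def hankelH01 (ζ : ℂ) : ℂ :=
  -2 * Complex.I / (Real.sqrt Real.pi : ℂ) * Complex.exp (Complex.I * ζ) *
    hypU (1 / 2) 1 (-2 * Complex.I * ζ)


open MeasureTheory Set Filter Complex Polynomial

noncomputable def kerE (q : ℂ) (r : ℂ[X]) (s : ℂ) (t : ℝ) : ℂ :=
  exp (-q * t) * r.eval (t : ℂ) * ((t : ℂ) ^ (-3/4 + s) * ((1 : ℂ) + t) ^ (-3/4 - s))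

lemma kerE_continuousOn (q : ℂ) (r : ℂ[X]) (s : ℂ) : ContinuousOn (kerE q r s) (Ioi 0) := by
  unfold kerE
  intro t ht
  have ht : (0:ℝ) < t := ht
  have h1 : (t : ℂ) ∈ slitPlane := by simp [ht]
  have h2 : (1 + t : ℂ) ∈ slitPlane := by
    left; simp; linarith
  apply ContinuousAt.continuousWithinAt
  refine ContinuousAt.mul (ContinuousAt.mul (by fun_prop) ?_) (ContinuousAt.mul ?_ ?_)
  · exact (r.continuous.comp continuous_ofReal).continuousAt
  · exact (continuous_ofReal.continuousAt).cpow continuousAt_const h1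
  · exact (ContinuousAt.add continuousAt_const continuous_ofReal.continuousAt).cpow continuousAt_const h2

lemma kerE_norm (q : ℂ) (r : ℂ[X]) (s : ℂ) {t : ℝ} (ht : 0 < t) :
    ‖kerE q r s t‖ = Real.exp (-q.re * t) * ‖r.eval (t : ℂ)‖ *
      (t ^ (-3/4 + s.re) * (1 + t) ^ (-3/4 - s.re)) := by
  unfold kerE
  have h : ((1 : ℂ) + t) = ((1 + t : ℝ) : ℂ) := by push_cast; rfl
  rw [norm_mul, norm_mul, norm_mul, h, norm_cpow_eq_rpow_re_of_pos ht,
    norm_cpow_eq_rpow_re_of_pos (by linarith), norm_exp]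
  have e1 : ((-3/4 : ℂ) + s).re = -3/4 + s.re := by simp
  have e2 : ((-3/4 : ℂ) - s).re = -3/4 - s.re := by simp
  rw [e1, e2]; simp

lemma kerE_integrable {q : ℂ} (hq : 0 < q.re) (r : ℂ[X]) {s : ℂ} (hs : |s.re| < 1/4) :
    IntegrableOn (kerE q r s) (Ioi 0) := by
  rw [abs_lt] at hs
  induction r using Polynomial.induction_on' with
  | add p r hp hr =>
    refine (hp.add hr).congr_fun (fun t _ => ?_) measurableSet_Ioi
    simp only [kerE, eval_add, Pi.add_apply]; ring
  | monomial n a =>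
    have h := (integrableOn_rpow_mul_exp_neg_mul_rpow (p := 1) (s := n + (-3/4 + s.re)) (b := q.re)
      (by have : (0:ℝ) ≤ n := n.cast_nonneg
          linarith) one_pos hq).const_mul ‖a‖
    refine Integrable.mono' h ((kerE_continuousOn _ _ _).aestronglyMeasurable measurableSet_Ioi) ?_
    refine (ae_restrict_iff' measurableSet_Ioi).2 (ae_of_all _ fun t ht => ?_)
    have ht : (0:ℝ) < t := ht
    rw [kerE_norm _ _ _ ht]
    have h1 : (1 + t) ^ (-3/4 - s.re) ≤ 1 :=
      Real.rpow_le_one_of_one_le_of_nonpos (by linarith) (by linarith)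
    rw [Real.rpow_add ht (n : ℝ), Real.rpow_natCast, Real.rpow_one]
    have h2 : 0 ≤ ‖a‖ * (t ^ n * t ^ (-3/4 + s.re) * Real.exp (-q.re * t)) := by positivity
    simp only [eval_monomial, norm_mul, norm_pow, norm_real, Real.norm_eq_abs, abs_of_pos ht]
    calc _ = ‖a‖ * (t ^ n * t ^ (-3/4 + s.re) * Real.exp (-q.re * t)) * (1 + t) ^ (-3/4 - s.re) := by ring
      _ ≤ _ := mul_le_of_le_one_right h2 h1

noncomputable def intJ (q : ℂ) (r : ℂ[X]) (s : ℂ) : ℂ := ∫ t in Ioi (0:ℝ), kerE q r s t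

noncomputable def opT (q : ℂ) (r : ℂ[X]) : ℂ[X] :=
  X * (1 + X) * (derivative r - C q * r) + C (1/4) * (1 + 2 * X) * r

lemma intJ_ibp {q : ℂ} (hq : 0 < q.re) (r : ℂ[X]) {s : ℂ} (hs : |s.re| < 1/4) :
    s * intJ q r s = - intJ q (opT q r) s := by
  have hs' := abs_lt.1 hs
  set P : ℝ → ℂ := fun t => exp (-q * t) * r.eval (t : ℂ) *
    ((t : ℂ) ^ (1/4 + s) * ((1 : ℂ) + t) ^ (1/4 - s)) with hP
  have key : ∀ t : ℝ, 0 < t → (t : ℂ) ^ (1/4 + s) = t * (t : ℂ) ^ (-3/4 + s) ∧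
      ((1 : ℂ) + t) ^ (1/4 - s) = (1 + t) * ((1 : ℂ) + t) ^ (-3/4 - s) := by
    intro t ht
    have h0 : (t : ℂ) ≠ 0 := by exact_mod_cast ht.ne'
    have h1 : (1 + t : ℂ) ≠ 0 := by exact_mod_cast (by linarith : (1 + t) ≠ 0)
    constructor
    · rw [show (1/4 + s : ℂ) = 1 + (-3/4 + s) by ring, cpow_add _ _ h0, cpow_one]
    · rw [show (1/4 - s : ℂ) = 1 + (-3/4 - s) by ring, cpow_add _ _ h1, cpow_one]
  have hPE : ∀ t ∈ Ioi (0:ℝ), kerE q (X * (1 + X) * r) s t = P t := by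
    intro t ht
    obtain ⟨k1, k2⟩ := key t ht
    simp only [hP, kerE, k1, k2, eval_mul, eval_add, eval_X, eval_one]; ring
  have hderiv : ∀ t ∈ Ioi (0:ℝ), HasDerivAt P (s * kerE q r s t + kerE q (opT q r) s t) t := by
    intro t ht
    have ht : (0:ℝ) < t := ht
    obtain ⟨k1, k2⟩ := key t ht
    have h1 : (t : ℂ) ∈ slitPlane := by simp [ht]
    have h2 : (1 + t : ℂ) ∈ slitPlane := by
      left; simp; linarith
    have d1 : HasDerivAt (fun z : ℂ => exp (-q * z)) (exp (-q * t) * (-q * 1)) (t : ℂ) :=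
      ((hasDerivAt_id (t:ℂ)).const_mul (-q)).cexp
    have d2 : HasDerivAt (fun z : ℂ => r.eval z) (r.derivative.eval (t:ℂ)) (t : ℂ) := r.hasDerivAt _
    have d3 := (hasDerivAt_id (t:ℂ)).cpow_const (c := 1/4 + s) h1
    have d4 := ((hasDerivAt_id (t:ℂ)).const_add 1).cpow_const (c := 1/4 - s) h2
    have d := ((d1.mul d2).mul (d3.mul d4)).comp_ofReal
    refine d.congr_deriv ?_
    simp only [id, Pi.mul_apply]
    rw [k1, k2, show (1/4 + s - 1 : ℂ) = -3/4 + s by ring, show (1/4 - s - 1 : ℂ) = -3/4 - s by ring]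
    simp only [kerE, opT, eval_mul, eval_add, eval_sub, eval_X, eval_one, eval_C, eval_ofNat]
    ring
  have i1 := (kerE_integrable hq r hs).const_mul s
  have i2 := kerE_integrable hq (opT q r) hs
  have i3 : IntegrableOn P (Ioi 0) :=
    (kerE_integrable hq (X * (1 + X) * r) hs).congr_fun hPE measurableSet_Ioi
  have hlim := tendsto_zero_of_hasDerivAt_of_integrableOn_Ioi hderiv (i1.add i2) i3
  have hc : Continuous (fun t : ℝ => (t : ℂ) ^ (1/4 + s)) :=
    continuous_ofReal_cpow_const (by simp; linarith)
  have hcont : ContinuousWithinAt P (Ici 0) 0 := by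
    apply ContinuousAt.continuousWithinAt
    refine ContinuousAt.mul (ContinuousAt.mul (by fun_prop) ?_) (ContinuousAt.mul hc.continuousAt ?_)
    · exact (r.continuous.comp continuous_ofReal).continuousAt
    · exact (ContinuousAt.add continuousAt_const continuous_ofReal.continuousAt).cpow continuousAt_const
        (by simp)
  have hP0 : P 0 = 0 := by
    have : (1/4 + s : ℂ) ≠ 0 := by
      intro h; have := congrArg re h; simp at this; linarith
    simp only [hP, ofReal_zero, zero_cpow this]; ring
  have := integral_Ioi_of_hasDerivAt_of_tendsto hcont hderiv (i1.add i2) hlim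
  rw [hP0, integral_add i1 i2, integral_const_mul] at this
  unfold intJ
  linear_combination this

lemma intJ_vert_continuous {q : ℂ} (hq : 0 < q.re) (r : ℂ[X]) {c : ℝ} (hc : |c| < 1/4) :
    Continuous (fun y : ℝ => intJ q r (c + y * I)) := by
  have hre : ∀ y : ℝ, (c + y * I : ℂ).re = c := fun y => by simp
  refine continuous_of_dominated (bound := fun t => ‖kerE q r c t‖)
    (fun y => (kerE_continuousOn _ _ _).aestronglyMeasurable measurableSet_Ioi) (fun y => ?_)
    (kerE_integrable hq r (by simpa using hc)).norm ?_
  · refine (ae_restrict_iff' measurableSet_Ioi).2 (ae_of_all _ fun t ht => ?_)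
    rw [kerE_norm _ _ _ ht, kerE_norm _ _ _ ht, hre, ofReal_re]
  · refine (ae_restrict_iff' measurableSet_Ioi).2 (ae_of_all _ fun t ht => ?_)
    have ht : (0:ℝ) < t := ht
    have h0 : (t : ℂ) ≠ 0 := by exact_mod_cast ht.ne'
    have h1 : (1 + t : ℂ) ≠ 0 := by exact_mod_cast (by linarith : (1 + t) ≠ 0)
    unfold kerE
    refine continuous_const.mul (Continuous.mul ?_ ?_)
    · exact Continuous.const_cpow (by fun_prop) (Or.inl h0)
    · exact Continuous.const_cpow (by fun_prop) (Or.inl h1)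

lemma intJ_vert_bound (q : ℂ) (r : ℂ[X]) (c : ℝ) (y : ℝ) :
    ‖intJ q r (c + y * I)‖ ≤ ∫ t in Ioi (0:ℝ), ‖kerE q r c t‖ := by
  refine (norm_integral_le_integral_norm _).trans (le_of_eq ?_)
  refine setIntegral_congr_fun measurableSet_Ioi fun t ht => ?_
  simp only [kerE_norm _ _ _ ht]; simp

lemma intJ_vert_integrable {q : ℂ} (hq : 0 < q.re) {c : ℝ} (hc : |c| < 1/4) :
    Integrable (fun y : ℝ => intJ q 1 (c + y * I)) := by
  set A := ∫ t in Ioi (0:ℝ), ‖kerE q 1 c t‖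
  set B := ∫ t in Ioi (0:ℝ), ‖kerE q (opT q (opT q 1)) c t‖
  refine Integrable.mono' (integrable_inv_one_add_sq.const_mul (A + B))
    (intJ_vert_continuous hq 1 hc).aestronglyMeasurable (ae_of_all _ fun y => ?_)
  have hA := intJ_vert_bound q 1 c y
  have hB := intJ_vert_bound q (opT q (opT q 1)) c y
  have hs : |(c + y * I : ℂ).re| < 1/4 := by simpa using hc
  have e : (c + y * I) ^ 2 * intJ q 1 (c + y * I) = intJ q (opT q (opT q 1)) (c + y * I) := by
    rw [pow_two, mul_assoc, intJ_ibp hq 1 hs, mul_neg, intJ_ibp hq _ hs, neg_neg]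
  rw [← e, norm_mul, norm_pow, Complex.sq_norm, normSq_apply] at hB
  simp at hB
  rw [← div_eq_mul_inv, le_div_iff₀ (by positivity)]
  nlinarith [norm_nonneg (intJ q 1 (c + y * I)), mul_nonneg (mul_self_nonneg c) (norm_nonneg (intJ q 1 (c + y * I)))]

lemma w_cpow {t : ℝ} (ht : 0 < t) (x : ℂ) :
    ((t / (1 + t) : ℝ) : ℂ) ^ x = (t : ℂ) ^ x * ((1 : ℂ) + t) ^ (-x) := by
  have h1 : (0:ℝ) < 1 + t := by linarith
  have h : ((1 : ℂ) + t) = ((1 + t : ℝ) : ℂ) := by push_cast; rfl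
  rw [h, div_eq_mul_inv, ofReal_mul, mul_cpow_ofReal_nonneg ht.le (by positivity), ofReal_inv,
    inv_cpow _ _ (by rw [arg_ofReal_of_nonneg h1.le]; exact Real.pi_pos.ne), cpow_neg]

lemma kerE_shift (p s : ℂ) {t : ℝ} (ht : 0 < t) :
    kerE p 1 (-s) t = kerE p 1 0 t * ((t / (1 + t) : ℝ) : ℂ) ^ (-s) := by
  have h0 : (t : ℂ) ≠ 0 := by exact_mod_cast ht.ne'
  have h1 : (1 + t : ℂ) ≠ 0 := by exact_mod_cast (by linarith : (1 + t) ≠ 0)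
  rw [w_cpow ht]
  unfold kerE
  rw [cpow_add _ _ h0, cpow_sub _ _ h1, neg_neg, add_zero, sub_zero, cpow_neg _ s, cpow_neg _ s]
  have h2 : (1 + t : ℂ) ^ s ≠ 0 := by simp [cpow_eq_zero_iff, h1]
  field_simp

noncomputable def funH (q : ℂ) (u : ℝ) : ℂ :=
  exp (-q * u) * ((u : ℂ) ^ (1/4 : ℂ) * ((1 : ℂ) + u) ^ (1/4 : ℂ))

noncomputable def funG (q : ℂ) : ℝ → ℂ := (Iio (1:ℝ)).indicator (fun w => funH q (w / (1 - w)))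

lemma funG_w (q : ℂ) {t : ℝ} (ht : 0 < t) : funG q (t / (1 + t)) = funH q t := by
  have h1 : (0:ℝ) < 1 + t := by linarith
  have : t / (1 + t) < 1 := by rw [div_lt_one h1]; linarith
  rw [funG, indicator_of_mem (by exact this)]
  congr 1
  have : 1 - t / (1 + t) = 1 / (1 + t) := by field_simp; ring
  rw [this]; field_simp

lemma funG_continuousAt (q : ℂ) {t : ℝ} (ht : 0 < t) : ContinuousAt (funG q) (t / (1 + t)) := by
  have h1 : (0:ℝ) < 1 + t := by linarith
  have hlt : t / (1 + t) < 1 := by rw [div_lt_one h1]; linarith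
  have ev : (fun w => funH q (w / (1 - w))) =ᶠ[nhds (t / (1 + t))] funG q := by
    filter_upwards [Iio_mem_nhds hlt] with w hw
    rw [funG, indicator_of_mem hw]
  refine ContinuousAt.congr ?_ ev
  have hpos : 0 < (t / (1 + t)) / (1 - t / (1 + t)) := div_pos (by positivity) (by linarith)
  have hH : ContinuousAt (funH q) ((t / (1 + t)) / (1 - t / (1 + t))) := by
    set u := (t / (1 + t)) / (1 - t / (1 + t))
    unfold funH
    have h1 : (u : ℂ) ∈ slitPlane := by simp [hpos]
    have h2 : (1 + u : ℂ) ∈ slitPlane := by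
      left; simp; linarith
    refine ContinuousAt.mul (by fun_prop) (ContinuousAt.mul ?_ ?_)
    · exact (continuous_ofReal.continuousAt).cpow continuousAt_const h1
    · exact (ContinuousAt.add continuousAt_const continuous_ofReal.continuousAt).cpow
        continuousAt_const h2
  exact ContinuousAt.comp (f := fun w : ℝ => w / (1 - w)) hH
    (continuousAt_id.div (continuousAt_const.sub continuousAt_id) (by linarith))

lemma image_w : (fun t : ℝ => t / (1 + t)) '' Ioi 0 = Ioo 0 1 := by
  ext w
  constructor
  · rintro ⟨t, ht, rfl⟩
    have ht : (0:ℝ) < t := ht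
    exact ⟨by positivity, by rw [div_lt_one (by linarith)]; linarith⟩
  · rintro ⟨h0, h1⟩
    have h2 : 0 < 1 - w := by linarith
    refine ⟨w / (1 - w), div_pos h0 h2, ?_⟩
    have : 1 + w / (1 - w) = 1 / (1 - w) := by field_simp; ring
    simp only [this]; field_simp

lemma deriv_w : ∀ t ∈ Ioi (0:ℝ),
    HasDerivWithinAt (fun t : ℝ => t / (1 + t)) (1 / (1 + t) ^ 2) (Ioi 0) t := by
  intro t ht
  have ht : (0:ℝ) < t := ht
  have := (hasDerivAt_id t).div ((hasDerivAt_id t).const_add 1) (by simp only [id]; linarith)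
  refine (this.congr_deriv ?_).hasDerivWithinAt
  simp

lemma inj_w : InjOn (fun t : ℝ => t / (1 + t)) (Ioi 0) := by
  intro a ha b hb h
  have ha : (0:ℝ) < a := ha
  have hb : (0:ℝ) < b := hb
  have h' : a / (1 + a) = b / (1 + b) := h
  rw [div_eq_div_iff (by linarith) (by linarith)] at h'
  linarith

lemma mellin_integrand (q s : ℂ) : ∀ t ∈ Ioi (0:ℝ),
    |1 / (1 + t) ^ 2| • (((t / (1 + t) : ℝ) : ℂ) ^ (s - 1) • funG q (t / (1 + t)))
      = kerE q 1 s t := by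
  intro t ht
  have ht : (0:ℝ) < t := ht
  have h0 : (t : ℂ) ≠ 0 := by exact_mod_cast ht.ne'
  have h1 : (1 + t : ℂ) ≠ 0 := by exact_mod_cast (by linarith : (1 + t) ≠ 0)
  rw [funG_w q ht, w_cpow ht, abs_of_pos (by positivity), real_smul, smul_eq_mul]
  unfold funH kerE
  have e1 : (t:ℂ) ^ (-3/4 + s) = (t:ℂ) ^ (s - 1) * (t:ℂ) ^ (1/4 : ℂ) := by
    rw [← cpow_add _ _ h0]; congr 1; ring
  have e2 : (1 + t:ℂ) ^ (-3/4 - s) * (1 + t : ℂ) ^ 2 =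
      (1 + t:ℂ) ^ (-(s - 1)) * (1 + t:ℂ) ^ (1/4 : ℂ) := by
    rw [← cpow_add _ _ h1, ← cpow_ofNat, ← cpow_add _ _ h1]; congr 1
    ring
  have e3 : (1 + t:ℂ) ^ (-3/4 - s) =
      (1 + t:ℂ) ^ (-(s - 1)) * (1 + t:ℂ) ^ (1/4 : ℂ) / (1 + t : ℂ) ^ 2 := by
    rw [← e2]; field_simp
  rw [e1, e3, eval_one]
  push_cast
  ring

lemma ind_eq (q s : ℂ) : (Ioi (0:ℝ)).indicator (fun w : ℝ => (w:ℂ) ^ (s - 1) • funG q w) =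
    (Ioo (0:ℝ) 1).indicator (fun w : ℝ => (w:ℂ) ^ (s - 1) • funG q w) := by
  ext w
  by_cases h0 : 0 < w <;> by_cases h1 : w < 1 <;> simp [indicator, funG, h0, h1]

lemma mellin_funG (q s : ℂ) : mellin (funG q) s = intJ q 1 s := by
  unfold mellin intJ
  rw [← integral_indicator measurableSet_Ioi, ind_eq, integral_indicator measurableSet_Ioo, ← image_w,
    integral_image_eq_integral_abs_deriv_smul measurableSet_Ioi deriv_w inj_w]
  exact setIntegral_congr_fun measurableSet_Ioi (mellin_integrand q s)

lemma mellinConvergent_funG {q : ℂ} (hq : 0 < q.re) {s : ℂ} (hs : |s.re| < 1/4) :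
    MellinConvergent (funG q) s := by
  unfold MellinConvergent
  rw [← integrable_indicator_iff measurableSet_Ioi, ind_eq, integrable_indicator_iff measurableSet_Ioo,
    ← image_w,
    integrableOn_image_iff_integrableOn_abs_deriv_smul measurableSet_Ioi deriv_w inj_w]
  exact (kerE_integrable hq 1 hs).congr_fun (fun t ht => (mellin_integrand q s t ht).symm)
    measurableSet_Ioi

lemma inversion {q : ℂ} (hq : 0 < q.re) {c : ℝ} (hc : |c| < 1/4) {t : ℝ} (ht : 0 < t) :
    ∫ y : ℝ, ((t / (1 + t) : ℝ) : ℂ) ^ (-(c + y * I : ℂ)) * intJ q 1 (c + y * I)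
      = 2 * Real.pi * funH q t := by
  have h := mellinInv_mellin_eq c (funG q) (x := t / (1 + t)) (by positivity)
    (mellinConvergent_funG hq (by simpa using hc))
    (by
      have := intJ_vert_integrable hq hc
      simpa only [VerticalIntegrable, mellin_funG] using this) (funG_continuousAt q ht)
  rw [funG_w q ht] at h
  simp only [mellinInv, mellin_funG, smul_eq_mul] at h
  have hpi : (Real.pi : ℂ) ≠ 0 := by exact_mod_cast Real.pi_ne_zero
  rw [← h, real_smul, ← mul_assoc]
  have e : 2 * (Real.pi : ℂ) * ((1 / (2 * Real.pi) : ℝ) : ℂ) = 1 := by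
    push_cast; field_simp
  rw [e, one_mul]

lemma parseval {p q : ℂ} (hp : 0 < p.re) (hq : 0 < q.re) {c : ℝ} (hc : |c| < 1/4) :
    ∫ y : ℝ, intJ p 1 (-(c + y * I)) * intJ q 1 (c + y * I) =
      2 * Real.pi * ∫ t in Ioi (0:ℝ),
        exp (-(p + q) * t) * (t : ℂ) ^ (-1/2 : ℂ) * ((1:ℂ) + t) ^ (-1/2 : ℂ) := by
  have step1 : ∀ y : ℝ, intJ p 1 (-(c + y * I)) * intJ q 1 (c + y * I) =
      ∫ t in Ioi (0:ℝ), kerE p 1 (-(c + y * I)) t * intJ q 1 (c + y * I) := by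
    intro y; rw [integral_mul_const]; rfl
  simp_rw [step1]
  have hJ := intJ_vert_integrable hq hc
  rw [integral_integral_swap]
  · rw [← integral_const_mul]
    refine setIntegral_congr_fun measurableSet_Ioi fun t ht => ?_
    have ht : (0:ℝ) < t := ht
    have h0 : (t : ℂ) ≠ 0 := by exact_mod_cast ht.ne'
    have h1 : (1 + t : ℂ) ≠ 0 := by exact_mod_cast (by linarith : (1 + t) ≠ 0)
    simp only [kerE_shift _ _ ht, mul_assoc]
    rw [integral_const_mul, inversion hq hc ht]
    unfold kerE funH
    have e1 : (t:ℂ) ^ (-1/2 : ℂ) = (t:ℂ) ^ (-3/4 : ℂ) * (t:ℂ) ^ (1/4 : ℂ) := by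
      rw [← cpow_add _ _ h0]; norm_num
    have e2 : (1 + t:ℂ) ^ (-1/2 : ℂ) = (1 + t:ℂ) ^ (-3/4 : ℂ) * (1 + t:ℂ) ^ (1/4 : ℂ) := by
      rw [← cpow_add _ _ h1]; norm_num
    rw [e1, e2, show -(p + q) * (t:ℂ) = -p * t + -q * t by ring, Complex.exp_add, add_zero, sub_zero,
      eval_one]
    ring
  · have hk := (kerE_integrable hp 1 (s := -(c:ℂ)) (by simpa using hc)).norm
    have hb := hJ.norm.mul_prod hk
    refine Integrable.mono' hb ?_ ?_
    · refine AEStronglyMeasurable.mul ?_ ?_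
      · apply Measurable.aestronglyMeasurable
        simp only [kerE, eval_one]
        fun_prop
      · exact hJ.aestronglyMeasurable.comp_fst
    · have : ∀ᵐ z : ℝ × ℝ ∂(volume.prod (volume.restrict (Ioi (0:ℝ)))), z.2 ∈ Ioi (0:ℝ) :=
        Measure.quasiMeasurePreserving_snd.ae (ae_restrict_mem measurableSet_Ioi)
      filter_upwards [this] with z hz
      simp only [Function.uncurry, norm_mul]
      rw [mul_comm, kerE_norm _ _ _ hz, kerE_norm _ _ _ hz]
      simp

lemma gamma_parD {s z : ℂ} (hs : |s.re| < 1/4) :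
    Gamma (1/4 + s) * parD (-2 * s - 1/2) z =
      (2:ℂ) ^ (-s - 1/4) * exp (-z^2/4) * intJ (z^2/2) 1 s := by
  have hs' := abs_lt.1 hs
  have hG : Gamma (1/4 + s) ≠ 0 := Gamma_ne_zero_of_re_pos (by simp; linarith)
  unfold parD hypU
  rw [show (-2 * s - 1/2) / 2 = -s - 1/4 by ring, show -(-2 * s - 1/2) / 2 = 1/4 + s by ring]
  have : (∫ t in Set.Ioi (0 : ℝ), exp (-(z^2/2) * t) * (t : ℂ) ^ (1/4 + s - 1) *
      ((1 : ℂ) + t) ^ (1/2 - (1/4 + s) - 1)) = intJ (z^2/2) 1 s := by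
    unfold intJ kerE
    rw [show 1/4 + s - 1 = -3/4 + s by ring, show 1/2 - (1/4 + s) - 1 = -3/4 - s by ring]
    simp only [eval_one, mul_one, mul_assoc]
  rw [this]
  generalize Gamma (1/4 + s) = g at *
  field_simp

/-- Addition theorem for the order-zero Hankel function of the first kind. -/
theorem hankelH01_addition (ξ η σ : ℂ) (hξ : 0 < (ξ ^ 2).im) (hη : 0 < (η ^ 2).im)
    (hσ : |σ.re| < 1 / 4) :
    hankelH01 ((ξ ^ 2 + η ^ 2) / 2) =
      -((2 : ℂ) ^ ((1 : ℂ) / 2) / (Real.pi : ℂ) ^ 2) *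
        (Complex.I * ∫ τ : ℝ,
          Complex.Gamma (1 / 4 - (σ + Complex.I * τ)) *
          Complex.Gamma (1 / 4 + (σ + Complex.I * τ)) *
          parD (2 * (σ + Complex.I * τ) - 1 / 2) ((1 - Complex.I) * ξ) *
          parD (-2 * (σ + Complex.I * τ) - 1 / 2) ((1 - Complex.I) * η)) := by
  have sq : ∀ x : ℂ, ((1 - I) * x) ^ 2 = 2 * (-I * x ^ 2) := by
    intro x; linear_combination x ^ 2 * I_sq
  set p := -I * ξ ^ 2 with hp
  set q := -I * η ^ 2 with hq
  have hp0 : 0 < p.re := by rw [hp, neg_mul, neg_re, I_mul_re]; simpa using hξ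
  have hq0 : 0 < q.re := by rw [hq, neg_mul, neg_re, I_mul_re]; simpa using hη
  have integrand : ∀ s : ℂ, |s.re| < 1/4 →
      Gamma (1/4 - s) * Gamma (1/4 + s) * parD (2 * s - 1/2) ((1 - I) * ξ) *
        parD (-2 * s - 1/2) ((1 - I) * η) =
      (2:ℂ) ^ (-1/2 : ℂ) * exp (-(p + q) / 2) * (intJ p 1 (-s) * intJ q 1 s) := by
    intro s hs
    have a1 := gamma_parD (s := -s) (z := (1 - I) * ξ) (by simpa using hs)
    have a2 := gamma_parD (s := s) (z := (1 - I) * η) hs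
    rw [sq, ← hp, show 2 * p / 2 = p by ring, show -2 * -s - 1/2 = 2 * s - 1/2 by ring,
      ← sub_eq_add_neg, neg_neg] at a1
    rw [sq, ← hq, show 2 * q / 2 = q by ring] at a2
    have e1 : (2:ℂ) ^ (-1/2 : ℂ) = (2:ℂ) ^ (s - 1/4) * (2:ℂ) ^ (-s - 1/4) := by
      rw [← cpow_add _ _ two_ne_zero]; congr 1; ring
    have e2 : exp (-(p + q) / 2) = exp (-(2 * p) / 4) * exp (-(2 * q) / 4) := by
      rw [← Complex.exp_add]; congr 1; ring
    rw [e1, e2]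
    calc _ = (Gamma (1/4 - s) * parD (2 * s - 1/2) ((1 - I) * ξ)) *
          (Gamma (1/4 + s) * parD (-2 * s - 1/2) ((1 - I) * η)) := by ring
      _ = _ := by rw [a1, a2]; ring
  have hint : (∫ τ : ℝ, Gamma (1 / 4 - (σ + I * τ)) * Gamma (1 / 4 + (σ + I * τ)) *
          parD (2 * (σ + I * τ) - 1 / 2) ((1 - I) * ξ) *
          parD (-2 * (σ + I * τ) - 1 / 2) ((1 - I) * η)) =
      (2:ℂ) ^ (-1/2 : ℂ) * exp (-(p + q) / 2) * (2 * Real.pi * ∫ t in Ioi (0:ℝ),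
        exp (-(p + q) * t) * (t : ℂ) ^ (-1/2 : ℂ) * ((1:ℂ) + t) ^ (-1/2 : ℂ)) := by
    rw [← parseval hp0 hq0 hσ, ← integral_const_mul, ← integral_add_right_eq_self _ (-σ.im)]
    refine integral_congr_ae (ae_of_all _ fun τ => ?_)
    have hs : σ + I * ((τ + -σ.im : ℝ) : ℂ) = (σ.re : ℂ) + (τ : ℂ) * I := by
      push_cast
      linear_combination -(re_add_im σ)
    simp only
    rw [integrand _ (by simpa using hσ), hs]
  rw [hint]
  unfold hankelH01 hypU
  rw [Gamma_one_half_eq, show -2 * I * ((ξ ^ 2 + η ^ 2) / 2) = p + q by rw [hp, hq]; ring,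
    show I * ((ξ ^ 2 + η ^ 2) / 2) = -(p + q) / 2 by rw [hp, hq]; ring]
  rw [show (1/2 - 1 : ℂ) = -1/2 by norm_num, show (1 - 1/2 - 1 : ℂ) = -1/2 by norm_num]
  generalize (∫ t in Ioi (0:ℝ), exp (-(p + q) * t) * (t : ℂ) ^ (-1/2 : ℂ) *
    ((1:ℂ) + t) ^ (-1/2 : ℂ)) = J
  have hpi : (Real.pi : ℂ) ≠ 0 := by exact_mod_cast Real.pi_ne_zero
  have hroot : ((Real.sqrt Real.pi : ℝ) : ℂ) * ((Real.sqrt Real.pi : ℝ) : ℂ) = Real.pi := by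
    rw [← ofReal_mul, Real.mul_self_sqrt Real.pi_pos.le]
  have hgam : (Real.pi : ℂ) ^ (1/2 : ℂ) = ((Real.sqrt Real.pi : ℝ) : ℂ) := by
    rw [Real.sqrt_eq_rpow, ofReal_cpow Real.pi_pos.le]; norm_num
  have htwo : (2:ℂ) ^ (1/2 : ℂ) * (2:ℂ) ^ (-1/2 : ℂ) = 1 := by
    rw [← cpow_add _ _ two_ne_zero]; norm_num
  have hinv : (((Real.sqrt Real.pi : ℝ) : ℂ))⁻¹ * (((Real.sqrt Real.pi : ℝ) : ℂ))⁻¹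
      = (Real.pi : ℂ)⁻¹ := by rw [← mul_inv, hroot]
  rw [hgam]
  generalize exp (-(p + q) / 2) = e
  calc _ = -2 * I * e * J * ((((Real.sqrt Real.pi : ℝ) : ℂ))⁻¹ *
        (((Real.sqrt Real.pi : ℝ) : ℂ))⁻¹) := by ring
    _ = -2 * I * e * J * ((2:ℂ) ^ (1/2 : ℂ) * (2:ℂ) ^ (-1/2 : ℂ)) * (Real.pi : ℂ)⁻¹ := by
        rw [hinv, htwo]; ring
    _ = _ := by field_simp
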